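/- arXiv:1303.5685 — 2 statements merged into one kernel-verified Lean document; each statement's English description precedes it below -/
import Mathlib

section
/- For every x ≤ 0, the derivative of g_pro satisfies −1 ≤ g_pro'(x) ≤ −2/π. -/
/-!
Write `N = stdN`, `Φ = PhiPro`. Since `N' = -x N` and `Φ' = N`, the derivative of `g = N / Φ` is
`-(N² + x N Φ) / Φ²`, so the claim reads `(2/π) Φ² ≤ N² + x N Φ ≤ Φ²`. For `a > 0` the quadratic
form `N² + x N Φ - a Φ²` has the sign of
`gap a x = N(x) (x + √(x² + 4a)) / (2a) - Φ(x)` (`sq_sub_eq_gap_mul`),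
so one needs `gap 1 ≤ 0` and `gap (2/π) ≥ 0` on the negative half-line.

With `s = √(x² + 4a)`, the derivative of `gap a` has the sign opposite to `x + (2a - 1) s`
(`hasDerivAt_gap`).
* For `a = 1` that quantity is positive, so `gap 1` is antitone; it is bounded above by `N → 0` at
  `-∞`, hence it is nonpositive.
* For `a = 2/π` one has `0 ≤ 2a - 1 ≤ 1`, so `x + (2a - 1) s` is monotone and `gap a` first
  increases and then decreases on `(-∞, 0]`. It is bounded below by `-Φ → 0` at `-∞` and vanishes
  at `0` (this is where `2/π` comes from), hence it is nonnegative.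
-/

/-- The standard normal probability density function. -/
noncomputable def stdN (x : ℝ) : ℝ := (Real.sqrt (2 * Real.pi))⁻¹ * Real.exp (-x ^ 2 / 2)

/-- The standard normal cumulative distribution function (inverse probit link). -/
noncomputable def PhiPro (x : ℝ) : ℝ := ∫ t in Set.Iic x, stdN t

/-- The Mills-type ratio `g_pro(x) = 𝒩(x) / Φ_pro(x)`. -/
noncomputable def gPro (x : ℝ) : ℝ := stdN x / PhiPro x

open Real Set Filter Topology MeasureTheory

lemma stdN_pos (x : ℝ) : 0 < stdN x := by
  unfold stdN; positivity

lemma integrable_stdN : Integrable stdN := by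
  have h := (integrable_exp_neg_mul_sq (b := 1 / 2) (by norm_num)).const_mul (√(2 * π))⁻¹
  refine h.congr (Eventually.of_forall fun x => ?_)
  simp only [stdN]
  congr 2
  ring

lemma hasDerivAt_stdN (x : ℝ) : HasDerivAt stdN (-x * stdN x) x := by
  have h : HasDerivAt (fun x : ℝ => -x ^ 2 / 2) (-x) x := by
    convert! ((hasDerivAt_pow 2 x).neg.div_const 2) using 1
    norm_num
    ring
  convert! h.exp.const_mul (√(2 * π))⁻¹ using 1
  simp only [stdN]
  ring

lemma continuous_stdN : Continuous stdN :=
  continuous_iff_continuousAt.2 fun x => (hasDerivAt_stdN x).continuousAt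

lemma hasDerivAt_PhiPro (x : ℝ) : HasDerivAt PhiPro (stdN x) x := by
  have h : PhiPro = fun y => PhiPro 0 + ∫ t in (0 : ℝ)..y, stdN t := by
    funext y
    rw [← intervalIntegral.integral_Iic_sub_Iic integrable_stdN.integrableOn
      integrable_stdN.integrableOn]
    simp [PhiPro]
  rw [h]
  exact (continuous_stdN.integral_hasStrictDerivAt 0 x).hasDerivAt.const_add _

lemma PhiPro_pos (x : ℝ) : 0 < PhiPro x := by
  unfold PhiPro
  rw [setIntegral_pos_iff_support_of_nonneg_ae
    (Eventually.of_forall fun t => (stdN_pos t).le) integrable_stdN.integrableOn]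
  have : Function.support stdN = univ := by
    ext t; simp [(stdN_pos t).ne']
  simp [this]

lemma PhiPro_zero : PhiPro 0 = 1 / 2 := by
  have h := integral_gaussian_Ioi (1 / 2)
  have h2 : PhiPro 0 = ∫ t in Ioi (0 : ℝ), stdN t := by
    have h3 := integral_comp_neg_Iic (0 : ℝ) stdN
    rw [neg_zero] at h3
    rw [← h3]
    unfold PhiPro
    congr 1
    funext t
    simp [stdN]
  have h4 : stdN = fun t => (√(2 * π))⁻¹ * rexp (-(1 / 2) * t ^ 2) := by
    funext t
    simp only [stdN]
    congr 2
    ring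
  rw [h2, h4, integral_const_mul, h]
  have h5 : π / (1 / 2) = 2 * π := by ring
  rw [h5]
  have : √(2 * π) ≠ 0 := by positivity
  field_simp

lemma tendsto_stdN_atBot : Tendsto stdN atBot (𝓝 0) := by
  have h1 : Tendsto (fun x : ℝ => -x ^ 2 / 2) atBot atBot := by
    have h2 : Tendsto (fun x : ℝ => x ^ 2) atBot atTop := by
      simpa only [sq, id] using tendsto_id.atBot_mul_atBot₀ (tendsto_id (x := atBot))
    exact (tendsto_neg_atTop_atBot.comp h2).atBot_div_const two_pos
  have h3 := (Real.tendsto_exp_atBot.comp h1).const_mul (√(2 * π))⁻¹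
  rwa [mul_zero] at h3

lemma tendsto_PhiPro_atBot : Tendsto PhiPro atBot (𝓝 0) := by
  have h := intervalIntegral_tendsto_integral_Iic (0 : ℝ) integrable_stdN.integrableOn tendsto_id
  have h2 : PhiPro = fun y => PhiPro 0 - ∫ t in y..(0 : ℝ), stdN t := by
    funext y
    rw [← intervalIntegral.integral_Iic_sub_Iic integrable_stdN.integrableOn
      integrable_stdN.integrableOn]
    simp [PhiPro]
  rw [h2]
  simpa [PhiPro] using h.const_sub (PhiPro 0)

/-- The difference between `N(x) ρ` and `Φ(x)`, where `ρ` is the positive root of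
`a ρ² - x ρ - 1`. -/
noncomputable def gap (a x : ℝ) : ℝ :=
  stdN x * (x + √(x ^ 2 + 4 * a)) / (2 * a) - PhiPro x

section
variable {a : ℝ}

lemma abs_lt_root (ha : 0 < a) (x : ℝ) : |x| < √(x ^ 2 + 4 * a) :=
  Real.lt_sqrt_of_sq_lt (by rw [sq_abs]; linarith)

lemma sq_sub_eq_gap_mul (ha : 0 < a) (x : ℝ) :
    stdN x ^ 2 + x * stdN x * PhiPro x - a * PhiPro x ^ 2 =
      gap a x * (a * PhiPro x + stdN x * (√(x ^ 2 + 4 * a) - x) / 2) := by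
  have hs : √(x ^ 2 + 4 * a) ^ 2 = x ^ 2 + 4 * a := Real.sq_sqrt (by positivity)
  unfold gap
  generalize √(x ^ 2 + 4 * a) = s at *
  field_simp
  linear_combination (-stdN x ^ 2) * hs

lemma gap_cofactor_pos (ha : 0 < a) (x : ℝ) :
    0 < a * PhiPro x + stdN x * (√(x ^ 2 + 4 * a) - x) / 2 := by
  have h1 := PhiPro_pos x
  have h2 := stdN_pos x
  have h3 : 0 < √(x ^ 2 + 4 * a) - x := by
    linarith [abs_lt_root ha x, le_abs_self x]
  positivity

lemma hasDerivAt_gap (ha : 0 < a) (x : ℝ) :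
    HasDerivAt (gap a)
      (-(stdN x * (x + √(x ^ 2 + 4 * a)) ^ 2 / (8 * a ^ 2 * √(x ^ 2 + 4 * a)) *
        (x + (2 * a - 1) * √(x ^ 2 + 4 * a)))) x := by
  have hp : 0 < x ^ 2 + 4 * a := by positivity
  have hs : √(x ^ 2 + 4 * a) ^ 2 = x ^ 2 + 4 * a := Real.sq_sqrt hp.le
  have hs0 : 0 < √(x ^ 2 + 4 * a) := Real.sqrt_pos.2 hp
  have h1 : HasDerivAt (fun y : ℝ => √(y ^ 2 + 4 * a)) (x / √(x ^ 2 + 4 * a)) x := by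
    convert! ((hasDerivAt_pow 2 x).add_const (4 * a)).sqrt hp.ne' using 1
    field_simp
    norm_num
    ring
  convert! (((hasDerivAt_stdN x).mul ((hasDerivAt_id x).add h1)).div_const (2 * a)).sub
    (hasDerivAt_PhiPro x) using 1
  simp only [Pi.add_apply, id]
  generalize √(x ^ 2 + 4 * a) = s at *
  obtain rfl : a = (s ^ 2 - x ^ 2) / 4 := by linarith
  have hne : s ^ 2 - x ^ 2 ≠ 0 := by linarith
  field_simp
  ring

lemma differentiable_gap (ha : 0 < a) : Differentiable ℝ (gap a) :=
  fun x => (hasDerivAt_gap ha x).differentiableAt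

/-- The factor `x + (2a - 1) √(x² + 4a)` governing the sign of the derivative of `gap a` is
monotone. -/
lemma signFactor_mono (h1 : 1 / 2 ≤ a) (h2 : a ≤ 1) {t x : ℝ} (h : t ≤ x) :
    t + (2 * a - 1) * √(t ^ 2 + 4 * a) ≤ x + (2 * a - 1) * √(x ^ 2 + 4 * a) := by
  have ha : 0 < a := by linarith
  -- The map `x ↦ √(x² + 4a)` is 1-Lipschitz.
  have hl : √(t ^ 2 + 4 * a) ≤ √(x ^ 2 + 4 * a) + (x - t) := by
    rw [Real.sqrt_le_left (add_nonneg (Real.sqrt_nonneg _) (sub_nonneg.2 h))]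
    have hs : √(x ^ 2 + 4 * a) ^ 2 = x ^ 2 + 4 * a := Real.sq_sqrt (by positivity)
    have hx := (neg_abs_le x).trans' (neg_le_neg (abs_lt_root ha x).le)
    nlinarith
  nlinarith

lemma gap_deriv_coeff_nonneg (ha : 0 < a) (x : ℝ) :
    0 ≤ stdN x * (x + √(x ^ 2 + 4 * a)) ^ 2 / (8 * a ^ 2 * √(x ^ 2 + 4 * a)) := by
  have := stdN_pos x
  positivity

end

lemma gap_one_nonpos (x : ℝ) : gap 1 x ≤ 0 := by
  have hanti : Antitone (gap 1) := by
    refine antitone_of_deriv_nonpos (differentiable_gap one_pos) fun y => ?_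
    rw [(hasDerivAt_gap one_pos y).deriv, neg_nonpos]
    refine mul_nonneg (gap_deriv_coeff_nonneg one_pos y) ?_
    linarith [abs_lt_root one_pos y, neg_abs_le y]
  refine ge_of_tendsto tendsto_stdN_atBot ?_
  filter_upwards [eventually_le_atBot x, eventually_le_atBot 0] with t ht ht0
  refine (hanti ht).trans ?_
  have h1 : √(t ^ 2 + 4 * 1) ≤ 2 - t := by
    rw [Real.sqrt_le_left (by linarith)]
    nlinarith
  have h2 := stdN_pos t
  have h3 := PhiPro_pos t
  have h4 := mul_le_mul_of_nonneg_left (show t + √(t ^ 2 + 4 * 1) ≤ 2 by linarith) h2.le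
  unfold gap
  generalize stdN t * (t + √(t ^ 2 + 4 * 1)) = p at *
  linarith

lemma gap_two_div_pi_zero : gap (2 / π) 0 = 0 := by
  have h : √(0 ^ 2 + 4 * (2 / π)) = 4 / √(2 * π) := by
    rw [Real.sqrt_eq_iff_mul_self_eq (by positivity) (by positivity)]
    have := Real.mul_self_sqrt (show 0 ≤ 2 * π by positivity)
    rw [div_mul_div_comm, this]
    field_simp
    norm_num
  have hs : √(2 * π) ^ 2 = 2 * π := Real.sq_sqrt (by positivity)
  have h0 : √(2 * π) ≠ 0 := by positivity
  unfold gap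
  rw [h, PhiPro_zero]
  have hN : stdN 0 = (√(2 * π))⁻¹ := by simp [stdN]
  rw [hN]
  generalize √(2 * π) = s at *
  field_simp
  rw [hs]
  ring

lemma gap_two_div_pi_nonneg {x : ℝ} (hx : x ≤ 0) : 0 ≤ gap (2 / π) x := by
  have ha : 0 < 2 / π := by positivity
  have ha1 : 1 / 2 ≤ 2 / π := by
    rw [div_le_div_iff₀ two_pos pi_pos]; linarith [pi_le_four]
  have ha2 : 2 / π ≤ 1 := by
    rw [div_le_one pi_pos]; exact two_le_pi
  have hcont := (differentiable_gap ha).continuous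
  rcases le_total (x + (2 * (2 / π) - 1) * √(x ^ 2 + 4 * (2 / π))) 0 with hD | hD
  · -- `gap` is monotone on `(-∞, x]`, and is at least `-Φ` everywhere.
    have hmono : MonotoneOn (gap (2 / π)) (Iic x) := by
      refine monotoneOn_of_deriv_nonneg (convex_Iic x) hcont.continuousOn
        (differentiable_gap ha).differentiableOn fun y hy => ?_
      rw [interior_Iic] at hy
      rw [(hasDerivAt_gap ha y).deriv, neg_nonneg]
      exact mul_nonpos_of_nonneg_of_nonpos (gap_deriv_coeff_nonneg ha y)
        ((signFactor_mono ha1 ha2 (le_of_lt hy)).trans hD)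
    have hlim : Tendsto (fun t => -PhiPro t) atBot (𝓝 0) := by
      simpa using tendsto_PhiPro_atBot.neg
    refine le_of_tendsto hlim ?_
    filter_upwards [eventually_le_atBot x] with t ht
    refine le_trans ?_ (hmono ht self_mem_Iic ht)
    have h1 : 0 < t + √(t ^ 2 + 4 * (2 / π)) := by
      linarith [abs_lt_root ha t, neg_abs_le t]
    have h2 := stdN_pos t
    have h3 : 0 ≤ stdN t * (t + √(t ^ 2 + 4 * (2 / π))) / (2 * (2 / π)) := by positivity
    unfold gap
    linarith
  · have hanti : AntitoneOn (gap (2 / π)) (Icc x 0) := by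
      refine antitoneOn_of_deriv_nonpos (convex_Icc x 0) hcont.continuousOn
        (differentiable_gap ha).differentiableOn fun y hy => ?_
      rw [interior_Icc] at hy
      rw [(hasDerivAt_gap ha y).deriv, neg_nonpos]
      exact mul_nonneg (gap_deriv_coeff_nonneg ha y)
        (hD.trans (signFactor_mono ha1 ha2 hy.1.le))
    rw [← gap_two_div_pi_zero]
    exact hanti (left_mem_Icc.2 hx) (right_mem_Icc.2 hx) hx

lemma deriv_gPro (x : ℝ) :
    deriv gPro x = -((stdN x ^ 2 + x * stdN x * PhiPro x) / PhiPro x ^ 2) := by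
  have h := ((hasDerivAt_stdN x).div (hasDerivAt_PhiPro x) (PhiPro_pos x).ne').deriv
  have h2 : gPro = stdN / PhiPro := rfl
  rw [h2, h]
  ring

/-- For every `x ≤ 0`, the derivative of `g_pro` satisfies `-1 ≤ g_pro'(x) ≤ -2/π`. -/
theorem stmt1 (x : ℝ) (hx : x ≤ 0) :
    -1 ≤ deriv gPro x ∧ deriv gPro x ≤ -(2 / Real.pi) := by
  have ha : 0 < 2 / π := by positivity
  have hP : 0 < PhiPro x ^ 2 := pow_pos (PhiPro_pos x) 2
  have h1 := sq_sub_eq_gap_mul one_pos x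
  have h2 := sq_sub_eq_gap_mul ha x
  have h3 := mul_nonpos_of_nonpos_of_nonneg (gap_one_nonpos x) (gap_cofactor_pos one_pos x).le
  have h4 := mul_nonneg (gap_two_div_pi_nonneg hx) (gap_cofactor_pos ha x).le
  rw [deriv_gPro]
  constructor
  · rw [neg_le_neg_iff, div_le_one hP]
    linarith
  · rw [neg_le_neg_iff, le_div_iff₀ hP]
    linarith
end

section
/- For every x > 0, one has (x/√(2π) + 1/π + 1/2) · e^{−x²/2} ≤ 1. -/
/-- For every `x > 0`, `(x/√(2π) + 1/π + 1/2) · e^{-x²/2} ≤ 1`. -/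
theorem stmt4 (x : ℝ) (hx : 0 < x) :
    (x / Real.sqrt (2 * Real.pi) + (1 / Real.pi + 1 / 2)) * Real.exp (-x ^ 2 / 2) ≤ 1 := by
  have hpi := Real.pi_gt_three
  have hinv : 1 / Real.pi ≤ 1 / 3 := one_div_le_one_div_of_le (by norm_num) hpi.le
  have hsq : (1 / Real.sqrt (2 * Real.pi)) ^ 2 = 1 / Real.pi / 2 := by
    rw [div_pow, Real.sq_sqrt (by positivity)]
    field_simp
  -- With `a = 1/√(2π)`, AM-GM gives `a x ≤ x²/2 + a²/2`, and `a²/2 + 1/π + 1/2 = 5/(4π) + 1/2 ≤ 1`.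
  have hlin : x / Real.sqrt (2 * Real.pi) + (1 / Real.pi + 1 / 2) ≤ x ^ 2 / 2 + 1 := by
    rw [div_eq_mul_one_div x]
    nlinarith [sq_nonneg (x - 1 / Real.sqrt (2 * Real.pi))]
  calc (x / Real.sqrt (2 * Real.pi) + (1 / Real.pi + 1 / 2)) * Real.exp (-x ^ 2 / 2)
      ≤ Real.exp (x ^ 2 / 2) * Real.exp (-x ^ 2 / 2) := by
        gcongr
        exact hlin.trans (Real.add_one_le_exp _)
    _ = 1 := by
        rw [← Real.exp_add, neg_div, add_neg_cancel, Real.exp_zero]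
end
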